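/- arXiv:2012.00903 — 2 statements merged into one kernel-verified Lean document; each statement's English description precedes it below -/
import Mathlib

section
/- Let A be a unital C*-algebra, B ⊆ A a commutative unital C*-subalgebra, E : A → B a conditional expectation onto B, and T ∈ A an element satisfying the B-valued circular moment relations with respect to E. Then for every n ≥ 1, every ε(1),…,ε(n) ∈ {1,*} and all b₁,…,b_n ∈ B, one has |E(T^{(ε(1))} b₁ T^{(ε(2))} b₂ ⋯ T^{(ε(n))} b_n)| ≤ (∏_{j=1}^n ‖b_j‖) · E(T^{(ε(1))} T^{(ε(2))} ⋯ T^{(ε(n))}) in the C*-order of B. -/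
open Filter
open scoped ComplexOrder

section Preamble

variable {A : Type*} [CStarAlgebra A] [PartialOrder A] [StarOrderedRing A]

/-- The absolute value `(a* a)^{1/2}` of an element of a C*-algebra. -/
noncomputable def cabs (a : A) : A := CFC.sqrt (star a * a)

/-- `E : A → A` is a conditional expectation onto the C*-subalgebra `B`:
it takes values in `B`, fixes `B`, is a `B`-bimodule map, and is positive and contractive. -/
structure IsCondExp (B : StarSubalgebra ℂ A) (E : A →ₗ[ℂ] A) : Prop where
  mem_range : ∀ x : A, E x ∈ B
  fixes : ∀ b ∈ B, E b = b
  bimodule : ∀ b₁ ∈ B, ∀ b₂ ∈ B, ∀ x : A, E (b₁ * x * b₂) = b₁ * E x * b₂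
  positive : ∀ x : A, 0 ≤ x → 0 ≤ E x
  contractive : ∀ x : A, ‖E x‖ ≤ ‖x‖

/-- `word T [(ε₁,b₁),…,(εₙ,bₙ)] = T^{ε₁} * b₁ * ⋯ * T^{εₙ} * bₙ`, where `true` stands for
the exponent `1` and `false` for the exponent `*`. -/
def word (T : A) (l : List (Bool × A)) : A :=
  (l.map (fun p => (cond p.1 T (star T)) * p.2)).prod

/-- A word is balanced when there are as many `*`'s as `1`'s among the exponents. -/
abbrev IsBalanced (l : List (Bool × A)) : Prop :=
  2 * l.countP (fun p => p.1) = l.length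

/-- `T` satisfies the `B`-valued circular moment relations with respect to `E`:
the expectation of any unbalanced word vanishes, and the expectation of a nonempty balanced word
`T^{ε₁} b₁ ⋯ T^{εₙ} bₙ` satisfies the moment-cumulant recursion of a `B`-valued circular
element, where the sum runs over those positions `j ∈ {2,…,n}` (here `j = i + 2` for the
`i`-th entry of the tail, `0`-based) for which `ε_j ≠ ε₁` and the prefix `ε₁,…,ε_j` is
balanced. -/
structure IsBCircular (B : StarSubalgebra ℂ A) (E : A →ₗ[ℂ] A) (T : A) : Prop where
  expect_unbalanced : ∀ l : List (Bool × A), (∀ p ∈ l, p.2 ∈ B) →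
    ¬ IsBalanced l → E (word T l) = 0
  expect_cons_one : ∀ b ∈ B, ∀ tl : List (Bool × A), (∀ p ∈ tl, p.2 ∈ B) →
    IsBalanced ((true, b) :: tl) →
    E (word T ((true, b) :: tl)) =
      ∑ i ∈ Finset.range tl.length,
        if (tl.getD i (true, 1)).1 = false ∧ IsBalanced ((true, b) :: tl.take (i + 1)) then
          E (T * (b * E (word T (tl.take i))) * star T) * (tl.getD i (true, 1)).2 *
            E (word T (tl.drop (i + 1)))
        else 0
  expect_cons_star : ∀ b ∈ B, ∀ tl : List (Bool × A), (∀ p ∈ tl, p.2 ∈ B) →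
    IsBalanced ((false, b) :: tl) →
    E (word T ((false, b) :: tl)) =
      ∑ i ∈ Finset.range tl.length,
        if (tl.getD i (true, 1)).1 = true ∧ IsBalanced ((false, b) :: tl.take (i + 1)) then
          E (star T * (b * E (word T (tl.take i))) * T) * (tl.getD i (true, 1)).2 *
            E (word T (tl.drop (i + 1)))
        else 0

end Preamble

/-!
In a commutative C*-algebra `B`, the bound `|x| ≤ y` says that `Re (θ x) ≤ y` for every unimodular
scalar `θ`, and also that `|φ x| ≤ φ y` for every character `φ` of `B`. The first form shows that it
is preserved by sums and by positive maps into `B`, the second that it is preserved by products. The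
circular recursion computes moments from the coefficients by sums, products in `B` and the positive
maps `x ↦ E (T x T*)`, `x ↦ E (T* x T)` alone, so `|bⱼ| ≤ cⱼ` for all `j` implies
`|E (T^{ε₁} b₁ ⋯ T^{εₙ} bₙ)| ≤ E (T^{ε₁} c₁ ⋯ T^{εₙ} cₙ)`. Take `cⱼ = ‖bⱼ‖ • 1`.
-/

section DominatedIn

open WeakDual
open scoped ComplexStarModule IsMulCommutative

variable {A : Type*} [CStarAlgebra A] [PartialOrder A]
  {B : StarSubalgebra ℂ A} {x y x' y' : A}

/-- The domination relation `|x| ≤ y` between elements of a commutative C*-subalgebra `B`. It is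
encoded as `Re (θ x) ≤ y` for all unimodular scalars `θ`, a condition that refers only to the
linear structure, the involution and the order, so that positive maps preserve it. -/
structure DominatedIn (B : StarSubalgebra ℂ A) (x y : A) : Prop where
  mem_left : x ∈ B
  mem_right : y ∈ B
  realPart_smul_le : ∀ θ : ℂ, ‖θ‖ = 1 → (ℜ (θ • x) : A) ≤ y

namespace DominatedIn

lemma zero : DominatedIn B 0 0 :=
  ⟨B.zero_mem, B.zero_mem, by simp⟩

variable [StarOrderedRing A]

lemma one : DominatedIn B 1 1 := by
  refine ⟨B.one_mem, B.one_mem, fun θ hθ => ?_⟩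
  have hre : θ.re ≤ 1 := hθ ▸ Complex.re_le_norm θ
  simpa [realPart_smul, (IsSelfAdjoint.one A).imaginaryPart, Algebra.algebraMap_eq_smul_one] using
    smul_le_smul_of_nonneg_right hre (zero_le_one (α := A))

lemma add (h : DominatedIn B x y) (h' : DominatedIn B x' y') :
    DominatedIn B (x + x') (y + y') :=
  ⟨B.add_mem h.mem_left h'.mem_left, B.add_mem h.mem_right h'.mem_right, fun θ hθ => by
    simpa using add_le_add (h.realPart_smul_le θ hθ) (h'.realPart_smul_le θ hθ)⟩

lemma sum {ι : Type*} (s : Finset ι) {f g : ι → A} (h : ∀ i ∈ s, DominatedIn B (f i) (g i)) :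
    DominatedIn B (∑ i ∈ s, f i) (∑ i ∈ s, g i) := by
  induction s using Finset.cons_induction with
  | empty => exact zero
  | cons i s hi ih =>
    rw [Finset.forall_mem_cons] at h
    simpa only [Finset.sum_cons] using h.1.add (ih h.2)

lemma map {A' : Type*} [CStarAlgebra A'] [PartialOrder A'] [StarOrderedRing A']
    {B' : StarSubalgebra ℂ A'} (P : A →ₚ[ℂ] A') (hP : ∀ z, P z ∈ B') (h : DominatedIn B x y) :
    DominatedIn B' (P x) (P y) := by
  refine ⟨hP x, hP y, fun θ hθ => ?_⟩
  calc (ℜ (θ • P x) : A') = P (ℜ (θ • x)) := by rw [map_realPart P, map_smul P]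
    _ ≤ P y := OrderHomClass.mono P (h.realPart_smul_le θ hθ)

lemma map_conjugate {E : A →ₗ[ℂ] A} (hE_mem : ∀ z, E z ∈ B) (hE_nonneg : ∀ z, 0 ≤ z → 0 ≤ E z)
    (S : A) (h : DominatedIn B x y) : DominatedIn B (E (S * x * star S)) (E (S * y * star S)) :=
  h.map (.mk₀ (E ∘ₗ LinearMap.mulLeftRight ℂ (S, star S)) fun _ hz =>
    hE_nonneg _ (star_right_conjugate_nonneg hz S)) fun _ => hE_mem _

lemma of_norm (hx : x ∈ B) : DominatedIn B x ((‖x‖ : ℂ) • 1) := by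
  refine ⟨hx, B.smul_mem B.one_mem _, fun θ hθ => ?_⟩
  have hnorm : ‖(ℜ (θ • x) : A)‖ ≤ ‖x‖ := by
    simpa [norm_smul, hθ] using realPart.norm_le (θ • x)
  calc (ℜ (θ • x) : A) ≤ algebraMap ℝ A ‖(ℜ (θ • x) : A)‖ :=
        IsSelfAdjoint.le_algebraMap_norm_self (ℜ (θ • x)).2
    _ ≤ algebraMap ℝ A ‖x‖ := algebraMap_mono A hnorm
    _ = (‖x‖ : ℂ) • 1 := by rw [Algebra.algebraMap_eq_smul_one, Complex.coe_smul]

end DominatedIn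

section Gelfand

variable [StarOrderedRing A] [IsClosed (B : Set A)] [IsMulCommutative B]

lemma coe_nonneg_iff_forall_character (x : B) :
    0 ≤ (x : A) ↔ ∀ φ : characterSpace ℂ B, 0 ≤ φ x := by
  let _ : CommCStarAlgebra B := { (inferInstance : CStarAlgebra B) with mul_comm := mul_comm }
  have hx : IsStarNormal (x : A) := ⟨congrArg Subtype.val (mul_comm (star x) x)⟩
  simp only [StarOrderedRing.nonneg_iff_spectrum_nonneg (R := ℂ) (x : A) hx,
    ← StarSubalgebra.spectrum_eq, CharacterSpace.mem_spectrum_iff_exists, forall_exists_index,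
    forall_apply_eq_imp_iff]

lemma coe_le_coe_iff_forall_character (x y : B) :
    (x : A) ≤ y ↔ ∀ φ : characterSpace ℂ B, φ x ≤ φ y := by
  rw [← sub_nonneg, ← AddSubgroupClass.coe_sub, coe_nonneg_iff_forall_character]
  simp only [map_sub, sub_nonneg]

lemma dominatedIn_iff_forall_character (x y : B) :
    DominatedIn B (x : A) y ↔ ∀ φ : characterSpace ℂ B, (‖φ x‖ : ℂ) ≤ φ y := by
  have realPart_le_iff (θ : ℂ) :
      (ℜ (θ • (x : A)) : A) ≤ y ↔ ∀ φ : characterSpace ℂ B, ((θ * φ x).re : ℂ) ≤ φ y := by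
    have hcoe : (ℜ (θ • (x : A)) : A) = ((ℜ (θ • x) : B) : A) :=
      (map_realPart B.subtype (θ • x)).symm
    simp only [hcoe, coe_le_coe_iff_forall_character, map_realPart, map_smul, smul_eq_mul,
      Complex.coe_realPart]
  refine ⟨fun h φ => ?_, fun h => ⟨x.2, y.2, fun θ hθ => (realPart_le_iff θ).2 fun φ => ?_⟩⟩
  · obtain ⟨θ, hθ, hθx⟩ := Complex.exists_norm_eq_mul_self (φ x)
    simpa [← hθx] using (realPart_le_iff θ).1 (h.realPart_smul_le θ hθ) φ
  · refine le_trans ?_ (h φ)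
    exact_mod_cast (Complex.re_le_norm _).trans_eq (by rw [norm_mul, hθ, one_mul])

namespace DominatedIn

lemma mul (h : DominatedIn B x y) (h' : DominatedIn B x' y') :
    DominatedIn B (x * x') (y * y') := by
  lift x to B using h.mem_left
  lift y to B using h.mem_right
  lift x' to B using h'.mem_left
  lift y' to B using h'.mem_right
  rw [dominatedIn_iff_forall_character] at h h'
  refine (dominatedIn_iff_forall_character (x * x') (y * y')).2 fun φ => ?_
  have hnorm (z : B) : (0 : ℂ) ≤ ‖φ z‖ := mod_cast norm_nonneg (φ z)
  simpa using mul_le_mul (h φ) (h' φ) (hnorm x') ((hnorm x).trans (h φ))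

lemma cabs_le (h : DominatedIn B x y) : cabs x ≤ y := by
  lift x to B using h.mem_left
  lift y to B using h.mem_right
  rw [dominatedIn_iff_forall_character] at h
  have hnorm (φ : characterSpace ℂ B) : (0 : ℂ) ≤ ‖φ x‖ := mod_cast norm_nonneg (φ x)
  have hy : 0 ≤ (y : A) :=
    (coe_nonneg_iff_forall_character y).2 fun φ => (hnorm φ).trans (h φ)
  have hsq : star (x : A) * x ≤ y * y :=
    (coe_le_coe_iff_forall_character (star x * x) (y * y)).2 fun φ => by
      calc φ (star x * x) = (‖φ x‖ : ℂ) * ‖φ x‖ := by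
            rw [map_mul, map_star, Complex.star_def, Complex.conj_mul', sq]
        _ ≤ φ y * φ y := mul_le_mul (h φ) (h φ) (hnorm φ) ((hnorm φ).trans (h φ))
        _ = φ (y * y) := (map_mul φ y y).symm
  exact (CFC.sqrt_le_sqrt _ _ hsq).trans_eq (CFC.sqrt_mul_self _ hy)

end DominatedIn

end Gelfand

end DominatedIn

section Words

variable {A : Type*}

lemma isBalanced_iff_of_forall₂ {l l' : List (Bool × A)}
    (h : List.Forall₂ (fun p q => p.1 = q.1) l l') : IsBalanced l ↔ IsBalanced l' := by
  have hcount : l.countP (fun p => p.1) = l'.countP (fun p => p.1) := by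
    induction h with
    | nil => rfl
    | cons hpq _ ih => simp only [List.countP_cons, hpq, ih]
  rw [IsBalanced, IsBalanced, hcount, h.length_eq]

lemma getD_of_forall₂ {α β : Type*} {R : α → β → Prop} {l : List α} {l' : List β}
    (h : List.Forall₂ R l l') {a : α} {b : β} (hab : R a b) (i : ℕ) :
    R (l.getD i a) (l'.getD i b) := by
  induction h generalizing i with
  | nil => exact hab
  | cons hR _ ih =>
    cases i with
    | zero => exact hR
    | succ i => exact ih i

variable [CStarAlgebra A] {B : StarSubalgebra ℂ A} {E : A →ₗ[ℂ] A} {T : A}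

lemma word_map_smul {ι : Type*} (T : A) (ε : ι → Bool) (c : ι → ℂ) (a : ι → A) (l : List ι) :
    word T (l.map fun i => (ε i, c i • a i)) =
      (l.map c).prod • word T (l.map fun i => (ε i, a i)) := by
  induction l with
  | nil => simp only [word, List.map_nil, List.prod_nil, one_smul]
  | cons i l ih =>
    simp only [word, List.map_cons, List.prod_cons] at ih ⊢
    rw [ih, mul_smul_comm (c i), smul_mul_smul_comm]

lemma IsBCircular.expect_cons (hT : IsBCircular B E T) (s : Bool) {b : A} (hb : b ∈ B)
    {tl : List (Bool × A)} (htl : ∀ p ∈ tl, p.2 ∈ B) (hbal : IsBalanced ((s, b) :: tl)) :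
    E (word T ((s, b) :: tl)) =
      ∑ i ∈ Finset.range tl.length,
        if (tl.getD i (true, 1)).1 = !s ∧ IsBalanced ((s, b) :: tl.take (i + 1)) then
          E (cond s T (star T) * (b * E (word T (tl.take i))) * star (cond s T (star T))) *
            (tl.getD i (true, 1)).2 * E (word T (tl.drop (i + 1)))
        else 0 := by
  cases s
  · simpa using hT.expect_cons_star b hb tl htl hbal
  · simpa using hT.expect_cons_one b hb tl htl hbal

variable [PartialOrder A]

/-- Letterwise domination: the words `T^{ε₁} b₁ ⋯ T^{εₙ} bₙ` and `T^{ε₁} c₁ ⋯ T^{εₙ} cₙ` have the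
same exponents, and `|bⱼ| ≤ cⱼ` in `B` for every `j`. -/
def WordDominatedIn (B : StarSubalgebra ℂ A) : List (Bool × A) → List (Bool × A) → Prop :=
  List.Forall₂ fun p q => p.1 = q.1 ∧ DominatedIn B p.2 q.2

namespace WordDominatedIn

variable {l l' : List (Bool × A)}

lemma isBalanced_iff (h : WordDominatedIn B l l') : IsBalanced l ↔ IsBalanced l' :=
  isBalanced_iff_of_forall₂ (h.imp fun _ _ hpq => hpq.1)

lemma mem_left (h : WordDominatedIn B l l') : ∀ p ∈ l, p.2 ∈ B :=
  ((List.forall₂_and_left _ _).1 (h.imp fun _ _ hpq => ⟨hpq.2.mem_left, hpq⟩)).1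

lemma mem_right (h : WordDominatedIn B l l') : ∀ p ∈ l', p.2 ∈ B :=
  ((List.forall₂_and_left _ _).1 (h.flip.imp fun _ _ hpq => ⟨hpq.2.mem_right, hpq⟩)).1

variable [StarOrderedRing A]

lemma map_norm (hl : ∀ p ∈ l, p.2 ∈ B) :
    WordDominatedIn B l (l.map fun p => (p.1, (‖p.2‖ : ℂ) • (1 : A))) :=
  List.forall₂_map_right_iff.2 (List.forall₂_same.2 fun p hp => ⟨rfl, .of_norm (hl p hp)⟩)

theorem expect_word [IsClosed (B : Set A)] [IsMulCommutative B] (hE_mem : ∀ x, E x ∈ B)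
    (hE_nonneg : ∀ x, 0 ≤ x → 0 ≤ E x) (hE_one : E 1 = 1) (hT : IsBCircular B E T)
    {l l' : List (Bool × A)} (h : WordDominatedIn B l l') :
    DominatedIn B (E (word T l)) (E (word T l')) := by
  by_cases hbal : IsBalanced l
  swap
  · rw [hT.expect_unbalanced l h.mem_left hbal,
      hT.expect_unbalanced l' h.mem_right (h.isBalanced_iff.not.1 hbal)]
    exact .zero
  match l, l', h with
  | [], [], _ => simpa only [word, List.map_nil, List.prod_nil, hE_one] using .one
  | (s, b) :: tl, (_, c) :: tl', .cons ⟨rfl, hbc⟩ htl =>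
    have h' : WordDominatedIn B ((s, b) :: tl) ((s, c) :: tl') := .cons ⟨rfl, hbc⟩ htl
    rw [hT.expect_cons s hbc.mem_left (mem_left htl) hbal,
      hT.expect_cons s hbc.mem_right (mem_right htl) (h'.isBalanced_iff.1 hbal),
      htl.length_eq]
    refine .sum _ fun i _ => ?_
    have hletter := getD_of_forall₂ htl (a := (true, 1)) (b := (true, 1)) ⟨rfl, .one⟩ i
    have hprefix : WordDominatedIn B ((s, b) :: tl.take (i + 1)) ((s, c) :: tl'.take (i + 1)) :=
      .cons ⟨rfl, hbc⟩ (List.forall₂_take (i + 1) htl)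
    have hinner : DominatedIn B (E (word T (tl.take i))) (E (word T (tl'.take i))) :=
      expect_word hE_mem hE_nonneg hE_one hT (List.forall₂_take i htl)
    have houter : DominatedIn B (E (word T (tl.drop (i + 1)))) (E (word T (tl'.drop (i + 1)))) :=
      expect_word hE_mem hE_nonneg hE_one hT (List.forall₂_drop (i + 1) htl)
    simp only [hletter.1, hprefix.isBalanced_iff]
    split_ifs
    · exact (((hbc.mul hinner).map_conjugate hE_mem hE_nonneg _).mul hletter.2).mul houter
    · exact .zero
termination_by l.length

end WordDominatedIn

end Words

theorem abs_expectation_word_le_general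
    {A : Type*} [CStarAlgebra A] [PartialOrder A] [StarOrderedRing A]
    (B : StarSubalgebra ℂ A) (hBclosed : IsClosed (B : Set A))
    (hBcomm : ∀ x ∈ B, ∀ y ∈ B, x * y = y * x)
    (E : A →ₗ[ℂ] A) (hE_mem : ∀ x, E x ∈ B) (hE_nonneg : ∀ x, 0 ≤ x → 0 ≤ E x) (hE_one : E 1 = 1)
    (T : A) (hT : IsBCircular B E T)
    (l : List (Bool × A)) (hlB : ∀ p ∈ l, p.2 ∈ B) :
    cabs (E (word T l)) ≤
      (((l.map (fun p => ‖p.2‖)).prod : ℝ) : ℂ) •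
        E (word T (l.map (fun p => (p.1, (1 : A))))) := by
  have : IsMulCommutative B := ⟨⟨fun x y => Subtype.ext (hBcomm x x.2 y y.2)⟩⟩
  have hprod : (((l.map fun p => ‖p.2‖).prod : ℝ) : ℂ) = (l.map fun p => (‖p.2‖ : ℂ)).prod := by
    rw [← Complex.ofRealHom_eq_coe, map_list_prod, List.map_map]
    rfl
  calc cabs (E (word T l))
      ≤ E (word T (l.map fun p => (p.1, (‖p.2‖ : ℂ) • (1 : A)))) :=
        (WordDominatedIn.expect_word hE_mem hE_nonneg hE_one hT (.map_norm hlB)).cabs_le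
    _ = _ := by
      rw [word_map_smul T Prod.fst (fun p => (‖p.2‖ : ℂ)) (fun _ => 1), map_smul, hprod]

/-- For a `B`-valued circular element `T` over a commutative unital C*-subalgebra `B`,
`|E(T^{ε₁} b₁ ⋯ T^{εₙ} bₙ)| ≤ (∏ⱼ ‖bⱼ‖) E(T^{ε₁} ⋯ T^{εₙ})` in the C*-order of `B`. -/
theorem abs_expectation_word_le
    {A : Type*} [CStarAlgebra A] [PartialOrder A] [StarOrderedRing A]
    (B : StarSubalgebra ℂ A) (hBclosed : IsClosed (B : Set A))
    (hBcomm : ∀ x ∈ B, ∀ y ∈ B, x * y = y * x)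
    (E : A →ₗ[ℂ] A) (hE : IsCondExp B E)
    (T : A) (hT : IsBCircular B E T)
    (l : List (Bool × A)) (hl : l ≠ []) (hlB : ∀ p ∈ l, p.2 ∈ B) :
    cabs (E (word T l)) ≤
      (((l.map (fun p => ‖p.2‖)).prod : ℝ) : ℂ) •
        E (word T (l.map (fun p => (p.1, (1 : A))))) :=
  abs_expectation_word_le_general B hBclosed hBcomm E hE.mem_range hE.positive
    (hE.fixes 1 B.one_mem) T hT l hlB
end

section
/- Let A be a unital C*-algebra, B ⊆ A a commutative unital C*-subalgebra, E : A → B a faithful conditional expectation onto B, and T ∈ A an element satisfying the B-valued circular moment relations with respect to E. Then for every n ≥ 1, every ε(1),…,ε(n) ∈ {1,*} and all b₁,…,b_n ∈ B: ‖T^{(ε(1))} b₁ T^{(ε(2))} b₂ ⋯ T^{(ε(n))} b_n‖ ≤ (∏_{j=1}^n ‖b_j‖) · ‖T^{(ε(1))} T^{(ε(2))} ⋯ T^{(ε(n))}‖. -/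
open Filter
open scoped ComplexOrder

/-!
Since `B` is commutative, `|·| ≤ ·` between elements of `B` is a pointwise statement about
characters. It is equivalent to the family of inequalities `Re (w x) ≤ y` over unimodular `w`, so it
survives sums and positive maps, and it survives products because absolute values multiply. Every
summand of the moment recursion is built from products and the positive maps `x ↦ E (S x S*)`;
hence replacing each `bⱼ` by `‖bⱼ‖` dominates every moment: `|E (word T l)| ≤ E (word T l')`.

If `w` is the value of a word, then `(w w*)ᵏ` is again the value of a word, so the domination
compares `‖E ((w w*)ᵏ)‖` for the two coefficient systems. A faithful positive map detects the norm
of `a ≥ 0` through the exponential growth rate of `‖E (aᵏ)‖`, because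
`sᵏ ((a - s)₊)² ≤ aᵏ⁺²` for all `s ≥ 0`.
-/

section CommutativeDomination

theorem isStarNormal_of_mem {S A : Type*} [Mul A] [Star A] [SetLike S A] [MulMemClass S A]
    [StarMemClass S A] {s : S} [IsMulCommutative s] {x : A} (hx : x ∈ s) : IsStarNormal x :=
  ⟨setLike_mul_comm (star_mem hx) hx⟩

theorem isMulCommutative_topologicalClosure {R A : Type*} [CommRing R] [StarRing R]
    [TopologicalSpace A] [Ring A] [Algebra R A] [StarRing A] [StarModule R A]
    [IsSemitopologicalRing A] [ContinuousStar A] [T2Space A] (S : StarSubalgebra R A)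
    [IsMulCommutative S] : IsMulCommutative S.topologicalClosure :=
  ⟨⟨(S.commRingTopologicalClosure fun x y => Subtype.ext (setLike_mul_comm x.2 y.2)).mul_comm⟩⟩

variable {A : Type*} [CStarAlgebra A] [PartialOrder A] [StarOrderedRing A]
  {B : StarSubalgebra ℂ A} [IsMulCommutative B]

open scoped IsMulCommutative in
theorem nonneg_iff_forall_character_nonneg (hB : IsClosed (B : Set A)) (b : B) :
    0 ≤ (b : A) ↔ ∀ χ : B →⋆ₐ[ℂ] ℂ, 0 ≤ χ b := by
  let _ : CommCStarAlgebra B :=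
    { StarSubalgebra.cstarAlgebra B (h_closed := hB) with mul_comm := mul_comm }
  rw [StarOrderedRing.nonneg_iff_spectrum_nonneg (R := ℂ) (b : A) (isStarNormal_of_mem b.2),
    ← StarSubalgebra.spectrum_eq B (hS := hB)]
  refine ⟨fun h χ => h _ (AlgHom.apply_mem_spectrum χ b), fun h z hz => ?_⟩
  obtain ⟨χ, rfl⟩ := WeakDual.CharacterSpace.mem_spectrum_iff_exists.1 hz
  exact h (StarAlgHomClass.toStarAlgHom χ)

theorem cfcAbs_le_of_forall_norm_character_le (hB : IsClosed (B : Set A)) {x y : B}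
    (h : ∀ χ : B →⋆ₐ[ℂ] ℂ, (‖χ x‖ : ℂ) ≤ χ y) : CFC.abs (x : A) ≤ y := by
  have hy : 0 ≤ (y : A) := (nonneg_iff_forall_character_nonneg hB y).2 fun χ =>
    (Complex.zero_le_real.2 (norm_nonneg _)).trans (h χ)
  have hsq : star (x : A) * x ≤ y ^ 2 := by
    refine sub_nonneg.1 ((nonneg_iff_forall_character_nonneg hB (y ^ 2 - star x * x)).2 fun χ => ?_)
    rw [map_sub, map_pow, map_mul, map_star, sub_nonneg, RCLike.star_def, Complex.conj_mul']
    exact pow_le_pow_left₀ (Complex.zero_le_real.2 (norm_nonneg _)) (h χ) 2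
  calc CFC.abs (x : A) ≤ CFC.sqrt ((y : A) ^ 2) := CFC.sqrt_le_sqrt _ _ hsq
    _ = y := CFC.sqrt_sq (y : A) hy

theorem realPart_le_cfcAbs {x : A} (hx : IsStarNormal x) : (realPart x : A) ≤ CFC.abs x := by
  rw [← cfc_re_id x, CFC.abs_eq_cfcₙ_coe_norm ℂ x, cfcₙ_eq_cfc]
  exact cfc_mono fun z _ => Complex.real_le_real.2 (Complex.re_le_norm z)

theorem cfcAbs_le_iff_forall_realPart_smul_le {x y : A} (hx : x ∈ B) (hy : y ∈ B) :
    CFC.abs x ≤ y ↔ ∀ w : ℂ, ‖w‖ = 1 → (realPart (w • x) : A) ≤ y := by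
  refine ⟨fun h w hw => ?_, fun h => ?_⟩
  · calc (realPart (w • x) : A) ≤ CFC.abs (w • x) :=
          realPart_le_cfcAbs (isStarNormal_of_mem (B.smul_mem hx w))
      _ = CFC.abs x := by rw [CFC.abs_smul, hw, one_smul]
      _ ≤ y := h
  have hclosed : IsClosed (B.topologicalClosure : Set A) := B.isClosed_topologicalClosure
  have := isMulCommutative_topologicalClosure B
  let x' : B.topologicalClosure := ⟨x, B.le_topologicalClosure hx⟩
  let y' : B.topologicalClosure := ⟨y, B.le_topologicalClosure hy⟩
  refine cfcAbs_le_of_forall_norm_character_le hclosed (x := x') (y := y') fun χ => ?_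
  obtain ⟨w, hw, hwx⟩ := RCLike.exists_norm_eq_mul_self (χ x')
  have hre : (realPart (χ (w • x')) : ℂ) ≤ χ y' := by
    rw [← map_realPart, ← sub_nonneg, ← map_sub]
    exact (nonneg_iff_forall_character_nonneg hclosed _).1 (sub_nonneg.2 (h w hw)) χ
  simpa [← hwx] using hre

theorem cfcAbs_sum_le_sum {ι : Type*} {s : Finset ι} {f g : ι → A} (hf : ∀ i ∈ s, f i ∈ B)
    (hg : ∀ i ∈ s, g i ∈ B) (h : ∀ i ∈ s, CFC.abs (f i) ≤ g i) :
    CFC.abs (∑ i ∈ s, f i) ≤ ∑ i ∈ s, g i := by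
  rw [cfcAbs_le_iff_forall_realPart_smul_le (sum_mem hf) (sum_mem hg)]
  intro w hw
  rw [Finset.smul_sum, map_sum, AddSubgroup.val_finsetSum]
  exact Finset.sum_le_sum fun i hi =>
    (cfcAbs_le_iff_forall_realPart_smul_le (hf i hi) (hg i hi)).1 (h i hi) w hw

theorem cfcAbs_mul_le_mul {x₁ x₂ y₁ y₂ : A} (hx₁ : x₁ ∈ B) (hx₂ : x₂ ∈ B) (hy₁ : y₁ ∈ B)
    (hy₂ : y₂ ∈ B) (h₁ : CFC.abs x₁ ≤ y₁) (h₂ : CFC.abs x₂ ≤ y₂) :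
    CFC.abs (x₁ * x₂) ≤ y₁ * y₂ := by
  have hcomm {x y : A} (hx : x ∈ B) (hy : y ∈ B) : Commute x y := setLike_mul_comm hx hy
  have hcomm_abs {x y : A} (hx : x ∈ B) (hy : y ∈ B) : Commute (CFC.abs x) y :=
    (hcomm hx hy).cfcAbs_left (hcomm hx (star_mem hy))
  have hcomm_abs_abs : Commute (CFC.abs x₁) (CFC.abs x₂) :=
    (hcomm_abs hx₂ hx₁).symm.cfcAbs_left
      (by simpa only [(CFC.abs_nonneg x₂).star_eq] using (hcomm_abs hx₂ hx₁).symm)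
  calc CFC.abs (x₁ * x₂) = CFC.abs x₁ * CFC.abs x₂ :=
        (hcomm hx₁ hx₂).cfcAbs_mul_eq (hcomm hx₁ (star_mem hx₂))
    _ ≤ CFC.abs x₁ * y₂ := sub_nonneg.1 <| by
        rw [← mul_sub]
        exact ((hcomm_abs hx₁ hy₂).sub_right hcomm_abs_abs).mul_nonneg (CFC.abs_nonneg x₁)
          (sub_nonneg.2 h₂)
    _ ≤ y₁ * y₂ := sub_nonneg.1 <| by
        rw [← sub_mul]
        exact ((hcomm hy₁ hy₂).sub_left (hcomm_abs hx₁ hy₂)).mul_nonneg (sub_nonneg.2 h₁)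
          ((CFC.abs_nonneg x₂).trans h₂)

theorem cfcAbs_le_norm_smul_one (x : A) : CFC.abs x ≤ ‖x‖ • (1 : A) := by
  simpa only [CFC.norm_abs, Algebra.algebraMap_eq_smul_one] using
    (CFC.abs_nonneg x).isSelfAdjoint.le_algebraMap_norm_self

theorem cfcAbs_map_le_map {D : Type*} [CStarAlgebra D] [PartialOrder D] [StarOrderedRing D]
    {C : StarSubalgebra ℂ D} [IsMulCommutative C] {φ : A →ₚ[ℂ] D} {x y : A} (hx : x ∈ B)
    (hy : y ∈ B) (hφx : φ x ∈ C) (hφy : φ y ∈ C) (h : CFC.abs x ≤ y) : CFC.abs (φ x) ≤ φ y := by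
  rw [cfcAbs_le_iff_forall_realPart_smul_le hφx hφy]
  intro w hw
  rw [← map_smul, ← map_realPart]
  exact OrderHomClass.mono φ ((cfcAbs_le_iff_forall_realPart_smul_le hx hy).1 h w hw)

end CommutativeDomination

section FaithfulPositiveMap

variable {A D : Type*} [CStarAlgebra A] [PartialOrder A] [StarOrderedRing A]
  [CStarAlgebra D] [PartialOrder D] [StarOrderedRing D]

theorem pow_smul_cfc_le_pow {a : A} (ha : 0 ≤ a) {s : ℝ} (hs : 0 ≤ s) (k : ℕ) :
    s ^ k • cfc (fun t : ℝ => max (t - s) 0 ^ 2) a ≤ a ^ (k + 2) := by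
  rw [← cfc_smul (s ^ k) (fun t : ℝ => max (t - s) 0 ^ 2) a, ← cfc_pow_id (R := ℝ) a (k + 2)]
  refine cfc_mono fun t ht => ?_
  have ht0 : 0 ≤ t := spectrum_nonneg_of_nonneg ha ht
  rcases le_total t s with hts | hst
  · simpa [hts] using pow_nonneg ht0 (k + 2)
  · rw [smul_eq_mul, pow_add, max_eq_left (sub_nonneg.2 hst)]
    gcongr
    exact sub_le_self t hs

theorem pow_mul_norm_map_cfc_le (φ : A →ₚ[ℂ] D) {a : A} (ha : 0 ≤ a) {s : ℝ} (hs : 0 ≤ s)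
    (k : ℕ) :
    s ^ k * ‖φ (cfc (fun t : ℝ => max (t - s) 0 ^ 2) a)‖ ≤ ‖φ (a ^ (k + 2))‖ := by
  set b : A := cfc (fun t : ℝ => max (t - s) 0 ^ 2) a
  have hb : 0 ≤ b := cfc_nonneg fun t _ => sq_nonneg (max (t - s) 0)
  calc s ^ k * ‖φ b‖ = ‖φ (s ^ k • b)‖ := by
        rw [φ.map_smul_of_tower, norm_smul, Real.norm_of_nonneg (pow_nonneg hs k)]
    _ ≤ ‖φ (a ^ (k + 2))‖ := CStarAlgebra.norm_le_norm_of_nonneg_of_le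
        (PositiveLinearMap.map_nonneg φ (smul_nonneg (pow_nonneg hs k) hb))
        (OrderHomClass.mono φ (pow_smul_cfc_le_pow ha hs k))

theorem norm_le_of_cfc_max_sub_eq_zero {a : A} (ha : 0 ≤ a) {s : ℝ} (hs : 0 ≤ s)
    (h : cfc (fun t : ℝ => max (t - s) 0) a = 0) : ‖a‖ ≤ s := by
  rw [CStarAlgebra.norm_le_iff_le_algebraMap a hs ha]
  calc a = cfc id a := (cfc_id ℝ a).symm
    _ ≤ cfc (fun t : ℝ => s + max (t - s) 0) a :=
        cfc_mono fun t _ => by simpa using sub_le_iff_le_add'.1 (le_max_left (t - s) 0)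
    _ = algebraMap ℝ A s := by rw [cfc_const_add s (fun t : ℝ => max (t - s) 0) a, h, add_zero]

theorem norm_le_of_norm_map_pow_le {φ : A →ₚ[ℂ] D} (hφ : ∀ x, φ (star x * x) = 0 → x = 0)
    {a : A} (ha : 0 ≤ a) {C R : ℝ} (hR : 0 ≤ R) (h : ∀ k ≠ 0, ‖φ (a ^ k)‖ ≤ C * R ^ k) :
    ‖a‖ ≤ R := by
  refine le_of_forall_gt_imp_ge_of_dense fun s hs => ?_
  have hs0 : 0 < s := hR.trans_lt hs
  set c : A := cfc (fun t : ℝ => max (t - s) 0) a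
  have hc_star : star c = c := (cfc_predicate _ a : IsSelfAdjoint c).star_eq
  have hc_sq : star c * c = cfc (fun t : ℝ => max (t - s) 0 ^ 2) a := by
    rw [hc_star, ← sq, cfc_pow (fun t : ℝ => max (t - s) 0) 2 a (ha := ha.isSelfAdjoint)]
  have hbound (k : ℕ) : ‖φ (star c * c)‖ ≤ C * R ^ 2 * (R / s) ^ k := by
    rw [div_pow, ← mul_div_assoc, le_div_iff₀ (pow_pos hs0 k), mul_comm, hc_sq, mul_assoc,
      ← pow_add, add_comm 2 k]
    exact (pow_mul_norm_map_cfc_le φ ha hs0.le k).trans (h (k + 2) (by omega))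
  have hlim : Tendsto (fun k : ℕ => C * R ^ 2 * (R / s) ^ k) atTop (nhds 0) := by
    simpa using (tendsto_pow_atTop_nhds_zero_of_lt_one (div_nonneg hR hs0.le)
      ((div_lt_one hs0).2 hs)).const_mul (C * R ^ 2)
  have hφc : φ (star c * c) = 0 := norm_le_zero_iff.1 (ge_of_tendsto' hlim hbound)
  exact norm_le_of_cfc_max_sub_eq_zero ha hs0.le (hφ c hφc)

end FaithfulPositiveMap

section Words

variable {A : Type*} [CStarAlgebra A]

/-- The letter `T^{(ε)}` of a word. -/
def letter (T : A) (ε : Bool) : A := cond ε T (star T)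

theorem letter_not (T : A) (ε : Bool) : letter T (!ε) = star (letter T ε) := by
  cases ε
  · exact (star_star T).symm
  · rfl

theorem word_nil (T : A) : word T [] = 1 := List.prod_nil

theorem word_cons (T : A) (p : Bool × A) (l : List (Bool × A)) :
    word T (p :: l) = letter T p.1 * p.2 * word T l := List.prod_cons

theorem word_append (T : A) (l m : List (Bool × A)) :
    word T (l ++ m) = word T l * word T m := by
  simp only [word, List.map_append, List.prod_append]

theorem word_flatten_replicate (T : A) (l : List (Bool × A)) (k : ℕ) :
    word T (List.replicate k l).flatten = word T l ^ k := by
  induction k with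
  | zero => rw [List.replicate_zero, List.flatten_nil, word_nil, pow_zero]
  | succ k ih => rw [List.replicate_succ, List.flatten_cons, word_append, ih, pow_succ']

/-- For a nonempty word with value `w`, a word with value `w * star w * d`: the innermost
coefficients merge, and the trailing `d` lets the construction recurse. The value on `[]` is junk,
since no word has value `d`. -/
def mulStarWord : List (Bool × A) → A → List (Bool × A)
  | [], _ => []
  | [p], d => [(p.1, p.2 * star p.2), (!p.1, d)]
  | p :: q :: l, d => p :: (mulStarWord (q :: l) (star p.2) ++ [(!p.1, d)])

theorem word_mulStarWord (T : A) {l : List (Bool × A)} (hl : l ≠ []) (d : A) :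
    word T (mulStarWord l d) = word T l * star (word T l) * d := by
  induction l, d using mulStarWord.induct with
  | case1 => contradiction
  | case2 p d =>
    simp only [mulStarWord, word_cons, word_nil, letter_not, star_mul, mul_one,
      mul_assoc]
  | case3 p q l d ih =>
    rw [mulStarWord, word_cons, word_append, ih (List.cons_ne_nil q l), word_cons T p]
    simp only [word_cons T (!p.1, d), word_nil, letter_not, star_mul, mul_one, mul_assoc]

theorem snd_mem_of_mem_mulStarWord {B : StarSubalgebra ℂ A} {l : List (Bool × A)} {d : A}
    (hl : ∀ p ∈ l, p.2 ∈ B) (hd : d ∈ B) : ∀ p ∈ mulStarWord l d, p.2 ∈ B := by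
  induction l, d using mulStarWord.induct with
  | case1 => exact hl
  | case2 p d =>
    obtain ⟨hp, -⟩ := List.forall_mem_cons.1 hl
    simpa [mulStarWord, hd] using mul_mem hp (star_mem hp)
  | case3 p q l d ih =>
    obtain ⟨hp, hl⟩ := List.forall_mem_cons.1 hl
    exact List.forall_mem_cons.2 ⟨hp, List.forall_mem_append.2
      ⟨ih hl (star_mem hp), List.forall_mem_singleton.2 hd⟩⟩

/-- The word with each coefficient `b` replaced by the scalar `‖b‖`. -/
noncomputable def normCoeffs (l : List (Bool × A)) : List (Bool × A) :=
  l.map fun p => (p.1, ‖p.2‖ • (1 : A))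

theorem real_smul_one_mem (B : StarSubalgebra ℂ A) (r : ℝ) : r • (1 : A) ∈ B := by
  simpa only [Complex.coe_smul] using B.smul_mem (one_mem B) (r : ℂ)

theorem snd_mem_of_mem_normCoeffs (B : StarSubalgebra ℂ A) {l : List (Bool × A)} {p : Bool × A}
    (hp : p ∈ normCoeffs l) : p.2 ∈ B := by
  obtain ⟨q, -, rfl⟩ := List.mem_map.1 hp
  exact real_smul_one_mem B ‖q.2‖

theorem normCoeffs_flatten_replicate (k : ℕ) (l : List (Bool × A)) :
    normCoeffs (List.replicate k l).flatten = (List.replicate k (normCoeffs l)).flatten := by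
  simp only [normCoeffs, List.map_flatten, List.map_replicate]

theorem normCoeffs_mulStarWord (l : List (Bool × A)) (d : A) :
    normCoeffs (mulStarWord l d) = mulStarWord (normCoeffs l) (‖d‖ • (1 : A)) := by
  induction l, d using mulStarWord.induct with
  | case1 => rfl
  | case2 p d =>
    simp only [normCoeffs, mulStarWord, List.map_cons, List.map_nil,
      CStarRing.norm_self_mul_star, star_smul, star_one, star_trivial,
      smul_mul_smul_comm, mul_one]
  | case3 p q l d ih =>
    simp only [normCoeffs, mulStarWord, List.map_cons, List.map_append, List.map_nil, norm_star,
      star_smul, star_one, star_trivial] at ih ⊢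
    rw [ih]

theorem norm_one_smul_one : ‖(1 : A)‖ • (1 : A) = 1 := by
  nontriviality A
  rw [norm_one, one_smul]

theorem word_normCoeffs (T : A) (l : List (Bool × A)) :
    word T (normCoeffs l) =
      (l.map fun p => ‖p.2‖).prod • word T (l.map fun p => (p.1, (1 : A))) := by
  induction l with
  | nil => exact (one_smul ℝ (1 : A)).symm
  | cons p l ih =>
    rw [normCoeffs] at ih ⊢
    simp only [List.map_cons, word_cons, ih, List.prod_cons, mul_smul_comm, mul_one,
      smul_mul_assoc, smul_smul, mul_comm]

end Words

section CircularMoments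

variable {A : Type*} [CStarAlgebra A]

/-- The `i`-th summand of the recursion for the moment of `T^{(ε)} b` followed by the word `l`:
it pairs the first letter with the letter at position `i` of `l`. -/
noncomputable def pairingTerm (E : A →ₗ[ℂ] A) (T : A) (ε : Bool) (b : A) (l : List (Bool × A))
    (i : ℕ) : A :=
  if (l.getD i (true, 1)).1 = !ε ∧ IsBalanced ((ε, b) :: l.take (i + 1)) then
    E (letter T ε * (b * E (word T (l.take i))) * star (letter T ε)) *
      (l.getD i (true, 1)).2 * E (word T (l.drop (i + 1)))
  else 0

variable {B : StarSubalgebra ℂ A} {E : A →ₗ[ℂ] A} {T : A}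

theorem IsBCircular.expect_cons_s8 (hT : IsBCircular B E T) {ε : Bool} {b : A} (hb : b ∈ B)
    {l : List (Bool × A)} (hl : ∀ p ∈ l, p.2 ∈ B) (hbal : IsBalanced ((ε, b) :: l)) :
    E (word T ((ε, b) :: l)) = ∑ i ∈ Finset.range l.length, pairingTerm E T ε b l i := by
  cases ε
  · simpa only [pairingTerm, letter, cond_false, Bool.not_false, star_star] using
      hT.expect_cons_star b hb l hl hbal
  · exact hT.expect_cons_one b hb l hl hbal

theorem isBalanced_normCoeffs {l : List (Bool × A)} : IsBalanced (normCoeffs l) ↔ IsBalanced l := by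
  simp only [IsBalanced, normCoeffs, List.countP_map, List.length_map, Function.comp_def]

theorem pairingTerm_mem (hEB : ∀ x, E x ∈ B) {ε : Bool} {b : A} {l : List (Bool × A)}
    (hl : ∀ p ∈ l, p.2 ∈ B) {i : ℕ} (hi : i < l.length) : pairingTerm E T ε b l i ∈ B := by
  rw [pairingTerm, List.getD_eq_getElem _ _ hi]
  split_ifs
  · exact mul_mem (mul_mem (hEB _) (hl _ (List.getElem_mem hi))) (hEB _)
  · exact zero_mem B

variable [PartialOrder A] [StarOrderedRing A]

theorem cfcAbs_map_conjugate_le [IsMulCommutative B] (hEB : ∀ x, E x ∈ B)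
    (hE : ∀ x, 0 ≤ x → 0 ≤ E x) (s : A) {x y : A} (hx : x ∈ B) (hy : y ∈ B) (h : CFC.abs x ≤ y) :
    CFC.abs (E (s * x * star s)) ≤ E (s * y * star s) :=
  cfcAbs_map_le_map (φ := .mk₀ (E ∘ₗ LinearMap.mulLeftRight ℂ (s, star s)) fun _ hz =>
    hE _ (star_right_conjugate_nonneg hz s)) hx hy (hEB _) (hEB _) h

theorem cfcAbs_pairingTerm_le [IsMulCommutative B] (hEB : ∀ x, E x ∈ B)
    (hE : ∀ x, 0 ≤ x → 0 ≤ E x) {ε : Bool} {b : A} (hb : b ∈ B) {l : List (Bool × A)}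
    (hl : ∀ p ∈ l, p.2 ∈ B) {i : ℕ} (hi : i < l.length)
    (htake : CFC.abs (E (word T (l.take i))) ≤ E (word T (normCoeffs (l.take i))))
    (hdrop : CFC.abs (E (word T (l.drop (i + 1)))) ≤ E (word T (normCoeffs (l.drop (i + 1))))) :
    CFC.abs (pairingTerm E T ε b l i) ≤ pairingTerm E T ε (‖b‖ • 1) (normCoeffs l) i := by
  have htake_eq (j : ℕ) : (normCoeffs l).take j = normCoeffs (l.take j) := List.map_take.symm
  have hdrop_eq (j : ℕ) : (normCoeffs l).drop j = normCoeffs (l.drop j) := List.map_drop.symm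
  have hi' : i < (normCoeffs l).length := by rwa [normCoeffs, List.length_map]
  have hget : (normCoeffs l)[i] = (l[i].1, ‖l[i].2‖ • (1 : A)) := List.getElem_map _
  have hbal : IsBalanced ((ε, ‖b‖ • (1 : A)) :: normCoeffs (l.take (i + 1))) ↔
      IsBalanced ((ε, b) :: l.take (i + 1)) := isBalanced_normCoeffs (l := (ε, b) :: l.take (i + 1))
  simp only [pairingTerm, htake_eq, hdrop_eq, List.getD_eq_getElem _ _ hi,
    List.getD_eq_getElem _ _ hi', hget, hbal]
  split_ifs
  · have hl_i : l[i].2 ∈ B := hl _ (List.getElem_mem hi)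
    have hinner : CFC.abs (b * E (word T (l.take i))) ≤
        ‖b‖ • 1 * E (word T (normCoeffs (l.take i))) :=
      cfcAbs_mul_le_mul hb (hEB _) (real_smul_one_mem B ‖b‖) (hEB _)
        (cfcAbs_le_norm_smul_one b) htake
    have houter := cfcAbs_map_conjugate_le hEB hE (letter T ε) (mul_mem hb (hEB _))
      (mul_mem (real_smul_one_mem B ‖b‖) (hEB _)) hinner
    have hleft := cfcAbs_mul_le_mul (hEB _) hl_i (hEB _) (real_smul_one_mem B _) houter
      (cfcAbs_le_norm_smul_one l[i].2)
    exact cfcAbs_mul_le_mul (mul_mem (hEB _) hl_i) (hEB _)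
      (mul_mem (hEB _) (real_smul_one_mem B _)) (hEB _) hleft hdrop
  · exact CFC.abs_zero.le

theorem IsBCircular.cfcAbs_expect_word_le [IsMulCommutative B] (hT : IsBCircular B E T)
    (hEB : ∀ x, E x ∈ B) (hE : ∀ x, 0 ≤ x → 0 ≤ E x) (l : List (Bool × A))
    (hl : ∀ p ∈ l, p.2 ∈ B) : CFC.abs (E (word T l)) ≤ E (word T (normCoeffs l)) := by
  have hmem (m : List (Bool × A)) : ∀ p ∈ normCoeffs m, p.2 ∈ B := fun _ hp =>
    snd_mem_of_mem_normCoeffs B hp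
  by_cases hbal : IsBalanced l
  · match l with
    | [] => exact (CFC.abs_of_nonneg (E 1) (ha := hE 1 zero_le_one)).le
    | (ε, b) :: l =>
      obtain ⟨hb, hl⟩ := List.forall_mem_cons.1 hl
      have hlen : (normCoeffs l).length = l.length := List.length_map _
      rw [hT.expect_cons_s8 hb hl hbal, normCoeffs, List.map_cons, ← normCoeffs,
        hT.expect_cons_s8 (real_smul_one_mem B ‖b‖) (hmem l) (isBalanced_normCoeffs.2 hbal), hlen]
      refine cfcAbs_sum_le_sum
        (fun i hi => pairingTerm_mem hEB hl (Finset.mem_range.1 hi))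
        (fun i hi => pairingTerm_mem hEB (hmem l) (hlen ▸ Finset.mem_range.1 hi))
        (fun i hi => ?_)
      have hi : i < l.length := Finset.mem_range.1 hi
      exact cfcAbs_pairingTerm_le hEB hE hb hl hi
        (hT.cfcAbs_expect_word_le hEB hE _ fun p hp => hl p (List.mem_of_mem_take hp))
        (hT.cfcAbs_expect_word_le hEB hE _ fun p hp => hl p (List.mem_of_mem_drop hp))
  · rw [hT.expect_unbalanced l hl hbal, CFC.abs_zero,
      hT.expect_unbalanced _ (hmem l) (isBalanced_normCoeffs.not.2 hbal)]
termination_by l.length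

theorem IsBCircular.norm_expect_word_pow_le [IsMulCommutative B] (hT : IsBCircular B E T)
    (hEB : ∀ x, E x ∈ B) (hE : ∀ x, 0 ≤ x → 0 ≤ E x) {l : List (Bool × A)}
    (hl : ∀ p ∈ l, p.2 ∈ B) (k : ℕ) :
    ‖E (word T l ^ k)‖ ≤ ‖E (word T (normCoeffs l) ^ k)‖ := by
  have hpow : ∀ p ∈ (List.replicate k l).flatten, p.2 ∈ B := fun p hp => by
    obtain ⟨m, hm, hpm⟩ := List.mem_flatten.1 hp
    exact hl p (List.eq_of_mem_replicate hm ▸ hpm)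
  have hle := hT.cfcAbs_expect_word_le hEB hE _ hpow
  rw [normCoeffs_flatten_replicate, word_flatten_replicate, word_flatten_replicate] at hle
  simpa only [CFC.norm_abs] using CStarAlgebra.norm_le_norm_of_nonneg_of_le (CFC.abs_nonneg _) hle

theorem IsBCircular.norm_word_le_norm_word_normCoeffs [IsMulCommutative B]
    (hT : IsBCircular B E T) (hEB : ∀ x, E x ∈ B) (hE : ∀ x, 0 ≤ x → 0 ≤ E x)
    (hfaithful : ∀ x, E (star x * x) = 0 → x = 0) {l : List (Bool × A)}
    (hl : ∀ p ∈ l, p.2 ∈ B) : ‖word T l‖ ≤ ‖word T (normCoeffs l)‖ := by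
  rcases eq_or_ne l [] with rfl | hne
  · exact le_rfl
  have hword : word T (mulStarWord l 1) = word T l * star (word T l) := by
    rw [word_mulStarWord T hne, mul_one]
  have hword_norm : word T (normCoeffs (mulStarWord l 1)) =
      word T (normCoeffs l) * star (word T (normCoeffs l)) := by
    rw [normCoeffs_mulStarWord, norm_one_smul_one,
      word_mulStarWord T (l := normCoeffs l) (List.map_eq_nil_iff.not.2 hne), mul_one]
  set a := word T l * star (word T l)
  set a' := word T (normCoeffs l) * star (word T (normCoeffs l))
  have hmoment (k : ℕ) (hk : k ≠ 0) : ‖E (a ^ k)‖ ≤ ‖E 1‖ * ‖a'‖ ^ k := calc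
    ‖E (a ^ k)‖ ≤ ‖E (a' ^ k)‖ := by
      simpa only [hword, hword_norm] using
        hT.norm_expect_word_pow_le hEB hE (snd_mem_of_mem_mulStarWord hl (one_mem B)) k
    _ ≤ ‖E 1‖ * ‖a' ^ k‖ := (PositiveLinearMap.mk₀ E hE).norm_apply_le_of_nonneg _
      (CStarAlgebra.pow_nonneg (mul_star_self_nonneg _) k)
    _ ≤ ‖E 1‖ * ‖a'‖ ^ k := by gcongr; exact norm_pow_le' a' (Nat.pos_of_ne_zero hk)
  have hnorm : ‖a‖ ≤ ‖a'‖ := norm_le_of_norm_map_pow_le (φ := .mk₀ E hE) hfaithful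
    (mul_star_self_nonneg _) (norm_nonneg _) hmoment
  rw [CStarRing.norm_self_mul_star, CStarRing.norm_self_mul_star] at hnorm
  exact (mul_self_le_mul_self_iff (norm_nonneg _) (norm_nonneg _)).2 hnorm

end CircularMoments

theorem norm_word_le_general
    {A : Type*} [CStarAlgebra A] [PartialOrder A] [StarOrderedRing A]
    (B : StarSubalgebra ℂ A) (hBcomm : ∀ x ∈ B, ∀ y ∈ B, x * y = y * x)
    (E : A →ₗ[ℂ] A) (hEB : ∀ x, E x ∈ B) (hE : ∀ x, 0 ≤ x → 0 ≤ E x)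
    (hfaithful : ∀ x : A, E (star x * x) = 0 → x = 0)
    (T : A) (hT : IsBCircular B E T) (l : List (Bool × A)) (hlB : ∀ p ∈ l, p.2 ∈ B) :
    ‖word T l‖ ≤
      (l.map (fun p => ‖p.2‖)).prod * ‖word T (l.map (fun p => (p.1, (1 : A))))‖ := by
  have := IsMulCommutative.of_setLike_mul_comm hBcomm
  have hprod : 0 ≤ (l.map fun p => ‖p.2‖).prod :=
    List.prod_nonneg (List.forall_mem_map.2 fun p _ => norm_nonneg p.2)
  calc ‖word T l‖ ≤ ‖word T (normCoeffs l)‖ :=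
        hT.norm_word_le_norm_word_normCoeffs hEB hE hfaithful hlB
    _ = _ := by rw [word_normCoeffs, norm_smul, Real.norm_of_nonneg hprod]

/-- For a `B`-valued circular element `T` over a commutative unital C*-subalgebra `B`,
with respect to a faithful conditional expectation `E`,
`‖T^{ε₁} b₁ ⋯ T^{εₙ} bₙ‖ ≤ (∏ⱼ ‖bⱼ‖) ‖T^{ε₁} ⋯ T^{εₙ}‖`. -/
theorem norm_word_le
    {A : Type*} [CStarAlgebra A] [PartialOrder A] [StarOrderedRing A]
    (B : StarSubalgebra ℂ A) (hBclosed : IsClosed (B : Set A))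
    (hBcomm : ∀ x ∈ B, ∀ y ∈ B, x * y = y * x)
    (E : A →ₗ[ℂ] A) (hE : IsCondExp B E)
    (hfaithful : ∀ x : A, E (star x * x) = 0 → x = 0)
    (T : A) (hT : IsBCircular B E T)
    (l : List (Bool × A)) (hl : l ≠ []) (hlB : ∀ p ∈ l, p.2 ∈ B) :
    ‖word T l‖ ≤
      (l.map (fun p => ‖p.2‖)).prod * ‖word T (l.map (fun p => (p.1, (1 : A))))‖ := by
  exact norm_word_le_general B hBcomm E hE.mem_range hE.positive hfaithful T hT l hlB
end
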